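/- arXiv:2508.01570 — 7 statements merged into one kernel-verified Lean document; each statement's English description precedes it below -/
import Mathlib

section
/- Let $\bar a_P > 0$, $\bar v_E \ge 0$, and initial data $(x_P^0,y_P^0) \ne (x_E^0,y_E^0)$, $(v_{Px}^0,v_{Py}^0) \in \mathbb{R}^2$. For $t \ge 0$ let $D(t) = \sqrt{(x_P^0-x_E^0+v_{Px}^0 t)^2+(y_P^0-y_E^0+v_{Py}^0 t)^2}$, $R_P(t) = \tfrac{1}{2}\bar a_P t^2$ and $R_E(t) = \bar v_E t$. Suppose $t_0 > 0$ satisfies $R_P(t_0) \ge R_E(t_0)$ and $D(t_0) = R_P(t_0) - R_E(t_0)$ (internal tangency of the evader's circle inside the pursuer's circle). Then for every $\theta_E \in \mathbb{R}$ there exists $t' \in (0, t_0]$ such that $\big(x_E^0+\bar v_E t'\cos\theta_E - x_P^0 - v_{Px}^0 t'\big)^2+\big(y_E^0+\bar v_E t'\sin\theta_E - y_P^0 - v_{Py}^0 t'\big)^2 = R_P(t')^2$. -/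
/-- Tangency-based capture guarantee: if at time `t₀ > 0` the evader's reachability
circle is internally tangent to (inscribed in) the pursuer's reachability circle, then
for every evader heading `θE` there is a time `t' ∈ (0, t₀]` at which the evader's
position lies on the pursuer's reachability circle. -/
theorem tangency_capture_guarantee
    (aP vE xP0 yP0 vPx0 vPy0 xE0 yE0 t0 : ℝ)
    (haP : 0 < aP) (hvE : 0 ≤ vE)
    (hne : (xP0, yP0) ≠ (xE0, yE0))
    (ht0 : 0 < t0)
    (hRge : vE * t0 ≤ (1 / 2) * aP * t0 ^ 2)
    (htan : Real.sqrt ((xP0 - xE0 + vPx0 * t0) ^ 2 + (yP0 - yE0 + vPy0 * t0) ^ 2)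
        = (1 / 2) * aP * t0 ^ 2 - vE * t0) :
    ∀ θE : ℝ, ∃ t' : ℝ, 0 < t' ∧ t' ≤ t0 ∧
      (xE0 + vE * t' * Real.cos θE - xP0 - vPx0 * t') ^ 2
        + (yE0 + vE * t' * Real.sin θE - yP0 - vPy0 * t') ^ 2
        = ((1 / 2) * aP * t' ^ 2) ^ 2 := by
  intro θ
  set c := Real.cos θ with hc
  set s := Real.sin θ with hs
  have hcs : s ^ 2 + c ^ 2 = 1 := Real.sin_sq_add_cos_sq θ
  obtain ⟨d, hd⟩ : ∃ d, d = (1 / 2) * aP * t0 ^ 2 - vE * t0 := ⟨_, rfl⟩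
  obtain ⟨w, hw⟩ : ∃ w, w = vE * t0 := ⟨_, rfl⟩
  obtain ⟨A, hA⟩ : ∃ A, A = xP0 - xE0 + vPx0 * t0 := ⟨_, rfl⟩
  obtain ⟨B, hB⟩ : ∃ B, B = yP0 - yE0 + vPy0 * t0 := ⟨_, rfl⟩
  have hd0 : 0 ≤ d := by rw [hd]; linarith
  have hw0 : 0 ≤ w := by rw [hw]; positivity
  rw [← hd, ← hA, ← hB] at htan
  have hAB : A ^ 2 + B ^ 2 = d ^ 2 := by
    rw [← htan, Real.sq_sqrt (by positivity)]
  have hcs' : -(c * A + s * B) ≤ d := by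
    refine (abs_le_of_sq_le_sq' ?_ hd0).2
    have : (c * A + s * B) ^ 2 + (c * B - s * A) ^ 2 = d ^ 2 := by
      rw [← hAB]
      linear_combination (A ^ 2 + B ^ 2) * hcs
    nlinarith [sq_nonneg (c * B - s * A)]
  have hcont : ContinuousOn (fun t : ℝ => (xE0 + vE * t * c - xP0 - vPx0 * t) ^ 2
        + (yE0 + vE * t * s - yP0 - vPy0 * t) ^ 2
        - ((1 / 2) * aP * t ^ 2) ^ 2) (Set.Icc 0 t0) := by
    fun_prop
  have h0 : 0 < (xE0 - xP0) ^ 2 + (yE0 - yP0) ^ 2 := by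
    by_contra h
    apply hne
    have h1 : xE0 - xP0 = 0 := by
      apply pow_eq_zero_iff (two_ne_zero) |>.1
      nlinarith [sq_nonneg (xE0 - xP0), sq_nonneg (yE0 - yP0)]
    have h2 : yE0 - yP0 = 0 := by
      apply pow_eq_zero_iff (two_ne_zero) |>.1
      nlinarith [sq_nonneg (xE0 - xP0), sq_nonneg (yE0 - yP0)]
    ext <;> simp <;> linarith
  have hend : (xE0 + vE * t0 * c - xP0 - vPx0 * t0) ^ 2
        + (yE0 + vE * t0 * s - yP0 - vPy0 * t0) ^ 2
        - ((1 / 2) * aP * t0 ^ 2) ^ 2 ≤ 0 := by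
    have e1 : xE0 + vE * t0 * c - xP0 - vPx0 * t0 = w * c - A := by rw [hw, hA]; ring
    have e2 : yE0 + vE * t0 * s - yP0 - vPy0 * t0 = w * s - B := by rw [hw, hB]; ring
    have e3 : (1 / 2) * aP * t0 ^ 2 = d + w := by rw [hd, hw]; ring
    rw [e1, e2, e3]
    have e4 : (w * c - A) ^ 2 + (w * s - B) ^ 2 - (d + w) ^ 2
        = 2 * (w * (-(c * A + s * B) - d)) := by
      linear_combination w ^ 2 * hcs + hAB
    rw [e4]
    have := mul_nonneg hw0 (sub_nonneg.2 hcs')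
    linarith
  obtain ⟨t, ⟨ht1, ht2⟩, ht⟩ := intermediate_value_Icc' ht0.le hcont
    (show (0 : ℝ) ∈ Set.Icc _ _ from ⟨hend, by simpa using h0.le⟩)
  refine ⟨t, lt_of_le_of_ne ht1 ?_, ht2, sub_eq_zero.1 ht⟩
  rintro rfl
  simp at ht
  linarith
end

section
/- Let $\bar a_P > 0$, $\bar v_E \ge 0$, and arbitrary $x_P^0,y_P^0,v_{Px}^0,v_{Py}^0,x_E^0,y_E^0 \in \mathbb{R}$. Define $\Gamma(t) = (x_P^0-x_E^0+v_{Px}^0 t)^2+(y_P^0-y_E^0+v_{Py}^0 t)^2-(\tfrac{1}{2}\bar a_P t^2-\bar v_E t)^2$. Then there exists $t \ge 2\bar v_E/\bar a_P$ such that $\Gamma(t) = 0$. -/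
/-- Existence of an internal tangency time: for any initial data there exists a time
`t ≥ 2 v̄E / āP` at which `Γ(t) = 0`, i.e., the evader's reachability circle is
internally tangent to the pursuer's reachability circle. -/
theorem exists_internal_tangency_time
    (aP vE xP0 yP0 vPx0 vPy0 xE0 yE0 : ℝ)
    (haP : 0 < aP) (hvE : 0 ≤ vE) :
    ∃ t : ℝ, 2 * vE / aP ≤ t ∧
      (xP0 - xE0 + vPx0 * t) ^ 2 + (yP0 - yE0 + vPy0 * t) ^ 2
        - ((1 / 2) * aP * t ^ 2 - vE * t) ^ 2 = 0 := by
  have key : ∀ p q v w : ℝ, ∃ T : ℝ, 2 * vE / aP ≤ T ∧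
      (p + v * T) ^ 2 + (q + w * T) ^ 2 - ((1 / 2) * aP * T ^ 2 - vE * T) ^ 2 ≤ 0 := by
    intro p q v w
    obtain ⟨M, hM⟩ : ∃ M, M = |p| + |q| + |v| + |w| := ⟨_, rfl⟩
    have hp := abs_nonneg p
    have hq := abs_nonneg q
    have hv := abs_nonneg v
    have hw := abs_nonneg w
    have hM0 : 0 ≤ M := by rw [hM]; positivity
    have h0 : 0 ≤ 2 * vE / aP := by positivity
    have h1 : 0 ≤ 2 * M / aP := by positivity
    obtain ⟨T, hT⟩ : ∃ T, T = 2 * vE / aP + 1 + 2 * M / aP := ⟨_, rfl⟩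
    have hT1 : 1 ≤ T := by linarith
    refine ⟨T, by linarith, ?_⟩
    have hR : (1 / 2) * aP * T - vE = aP / 2 + M := by
      rw [hT]; field_simp; ring
    have hR2 : (1 / 2) * aP * T ^ 2 - vE * T = (aP / 2 + M) * T := by
      rw [← hR]; ring
    have hX : |p + v * T| ≤ |p| * T + |v| * T := by
      have := abs_add_le p (v * T)
      rw [abs_mul, abs_of_nonneg (by linarith : (0:ℝ) ≤ T)] at this
      nlinarith
    have hY : |q + w * T| ≤ |q| * T + |w| * T := by
      have := abs_add_le q (w * T)
      rw [abs_mul, abs_of_nonneg (by linarith : (0:ℝ) ≤ T)] at this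
      nlinarith
    have hS : |p + v * T| + |q + w * T| ≤ (aP / 2 + M) * T := by
      rw [hM]; nlinarith [mul_pos haP (by linarith : (0:ℝ) < T)]
    have hX0 := abs_nonneg (p + v * T)
    have hY0 := abs_nonneg (q + w * T)
    have hsq := pow_le_pow_left₀ (add_nonneg hX0 hY0) hS 2
    rw [hR2, ← sq_abs (p + v * T), ← sq_abs (q + w * T)]
    nlinarith [mul_nonneg hX0 hY0]
  obtain ⟨T, hT, hneg⟩ := key (xP0 - xE0) (yP0 - yE0) vPx0 vPy0
  have hcont : ContinuousOn (fun t : ℝ => (xP0 - xE0 + vPx0 * t) ^ 2 + (yP0 - yE0 + vPy0 * t) ^ 2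
        - ((1 / 2) * aP * t ^ 2 - vE * t) ^ 2) (Set.Icc (2 * vE / aP) T) := by fun_prop
  have hR0 : (1 / 2) * aP * (2 * vE / aP) ^ 2 - vE * (2 * vE / aP) = 0 := by
    field_simp; ring
  obtain ⟨t, ht, h⟩ := intermediate_value_Icc' hT hcont (show (0:ℝ) ∈ _ from
    ⟨hneg, by simp only [hR0]; nlinarith [sq_nonneg (xP0 - xE0 + vPx0 * (2 * vE / aP)), sq_nonneg (yP0 - yE0 + vPy0 * (2 * vE / aP))]⟩)
  exact ⟨t, ht.1, h⟩
end

section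
/- Let $\bar a_P > 0$, $\bar v_E \ge 0$, $t > 0$ with $\bar a_P t > 2\bar v_E$, and suppose $\Gamma(t) = (x_P^0-x_E^0+v_{Px}^0 t)^2+(y_P^0-y_E^0+v_{Py}^0 t)^2-(\tfrac{1}{2}\bar a_P t^2-\bar v_E t)^2 = 0$. Define $x_f = \dfrac{\bar a_P t^2 x_E^0 - 2\bar v_E t (x_P^0+v_{Px}^0 t)}{\bar a_P t^2 - 2\bar v_E t}$ and $y_f = \dfrac{\bar a_P t^2 y_E^0 - 2\bar v_E t (y_P^0+v_{Py}^0 t)}{\bar a_P t^2 - 2\bar v_E t}$. Then $(x_f - x_P^0 - v_{Px}^0 t)^2 + (y_f - y_P^0 - v_{Py}^0 t)^2 = \tfrac{1}{4}\bar a_P^2 t^4$ and $(x_f - x_E^0)^2 + (y_f - y_E^0)^2 = \bar v_E^2 t^2$, i.e., $(x_f,y_f)$ lies on both reachability circles (it is the tangency point). -/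
/-- At an internal tangency time `t` (with `āP t > 2 v̄E` and `Γ(t) = 0`), the point
`(x_f, y_f)` given by the stated formulas lies on both the pursuer's and the evader's
reachability circles, i.e., it is the tangency point. -/
theorem tangency_point_on_both_circles
    (aP vE t xP0 yP0 vPx0 vPy0 xE0 yE0 : ℝ)
    (haP : 0 < aP) (hvE : 0 ≤ vE) (ht : 0 < t)
    (hgt : 2 * vE < aP * t)
    (hΓ : (xP0 - xE0 + vPx0 * t) ^ 2 + (yP0 - yE0 + vPy0 * t) ^ 2
        - ((1 / 2) * aP * t ^ 2 - vE * t) ^ 2 = 0) :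
    let xf := (aP * t ^ 2 * xE0 - 2 * vE * t * (xP0 + vPx0 * t)) / (aP * t ^ 2 - 2 * vE * t)
    let yf := (aP * t ^ 2 * yE0 - 2 * vE * t * (yP0 + vPy0 * t)) / (aP * t ^ 2 - 2 * vE * t)
    (xf - xP0 - vPx0 * t) ^ 2 + (yf - yP0 - vPy0 * t) ^ 2 = (1 / 4) * aP ^ 2 * t ^ 4 ∧
    (xf - xE0) ^ 2 + (yf - yE0) ^ 2 = vE ^ 2 * t ^ 2 := by
  intro xf yf
  have hD : 0 < aP * t ^ 2 - 2 * vE * t := by nlinarith [mul_pos ht (sub_pos.mpr hgt)]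
  have hx : xf * (aP * t ^ 2 - 2 * vE * t)
      = aP * t ^ 2 * xE0 - 2 * vE * t * (xP0 + vPx0 * t) := div_mul_cancel₀ _ hD.ne'
  have hy : yf * (aP * t ^ 2 - 2 * vE * t)
      = aP * t ^ 2 * yE0 - 2 * vE * t * (yP0 + vPy0 * t) := div_mul_cancel₀ _ hD.ne'
  clear_value xf yf
  have hD2 : (aP * t ^ 2 - 2 * vE * t) ^ 2 ≠ 0 := pow_ne_zero 2 hD.ne'
  have h1 : (xf - xP0 - vPx0 * t) * (aP * t ^ 2 - 2 * vE * t)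
      = -(aP * t ^ 2) * (xP0 - xE0 + vPx0 * t) := by linear_combination hx
  have h2 : (yf - yP0 - vPy0 * t) * (aP * t ^ 2 - 2 * vE * t)
      = -(aP * t ^ 2) * (yP0 - yE0 + vPy0 * t) := by linear_combination hy
  have h3 : (xf - xE0) * (aP * t ^ 2 - 2 * vE * t)
      = -(2 * vE * t) * (xP0 - xE0 + vPx0 * t) := by linear_combination hx
  have h4 : (yf - yE0) * (aP * t ^ 2 - 2 * vE * t)
      = -(2 * vE * t) * (yP0 - yE0 + vPy0 * t) := by linear_combination hy
  constructor
  · apply mul_right_cancel₀ hD2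
    rw [add_mul, ← mul_pow, ← mul_pow, h1, h2]
    linear_combination (aP * t ^ 2) ^ 2 * hΓ
  · apply mul_right_cancel₀ hD2
    rw [add_mul, ← mul_pow, ← mul_pow, h3, h4]
    linear_combination (2 * vE * t) ^ 2 * hΓ
end

section
/- Let $\bar v_P > \bar v_E \ge 0$ and $p_x,p_y,q_x,q_y \in \mathbb{R}$ with $p_x^2+p_y^2 = \bar v_P^2$. Set $h = p_xq_x+p_yq_y$, assume $g > 0$ satisfies $g^2 = h^2-(\bar v_P^2-\bar v_E^2)(q_x^2+q_y^2)$, set $t_f = (g-h)/(\bar v_P^2-\bar v_E^2)$ and assume $t_f \ne 0$. Define $e_x = p_x+q_x/t_f$ and $e_y = p_y+q_y/t_f$. Then \[\frac{1}{\bar v_P^2-\bar v_E^2}\Big(\frac{h}{g}-1\Big)\big(\bar v_E^2 - p_xe_x - p_ye_y\big) + \frac{q_xe_x+q_ye_y}{g} = 0.\] -/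
/-- The final algebraic identity verifying the HJI equation in the regime where the
pursuer cannot capture the evader before reaching its maximum speed. -/
theorem hji_final_identity (vP vE px py qx qy g : ℝ)
    (hlt : vE < vP) (hvE : 0 ≤ vE)
    (hp : px ^ 2 + py ^ 2 = vP ^ 2)
    (hg : 0 < g)
    (hg2 : g ^ 2 = (px * qx + py * qy) ^ 2 - (vP ^ 2 - vE ^ 2) * (qx ^ 2 + qy ^ 2)) :
    let h := px * qx + py * qy
    let tf := (g - h) / (vP ^ 2 - vE ^ 2)
    tf ≠ 0 →
      let ex := px + qx / tf
      let ey := py + qy / tf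
      (1 / (vP ^ 2 - vE ^ 2)) * (h / g - 1) * (vE ^ 2 - px * ex - py * ey)
        + (qx * ex + qy * ey) / g = 0 := by
  intro h tf htf ex ey
  have hD : vP ^ 2 - vE ^ 2 ≠ 0 := by nlinarith
  have hT : tf * (vP ^ 2 - vE ^ 2) = g - h := div_mul_cancel₀ _ hD
  have hh : h = px * qx + py * qy := rfl
  have hex : ex = px + qx / tf := rfl
  have hey : ey = py + qy / tf := rfl
  have hgh : g - h ≠ 0 := by
    rw [← hT]; exact mul_ne_zero htf hD
  clear_value ex ey tf h
  rw [← hh] at hg2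
  have hA : (1 / (vP ^ 2 - vE ^ 2)) * (h / g - 1) = -tf / g := by
    have : h = g - tf * (vP ^ 2 - vE ^ 2) := by linarith
    rw [this]
    field_simp
    ring
  have hB : tf * (vE ^ 2 - px * ex - py * ey) = -g := by
    have : tf * (vE ^ 2 - px * ex - py * ey)
        = -(tf * (px ^ 2 + py ^ 2 - vE ^ 2)) - (px * qx + py * qy) := by
      rw [hex, hey]; field_simp; ring
    rw [this, hp, hT, ← hh]; ring
  have hQ : qx ^ 2 + qy ^ 2 = -(h + g) * tf := by
    apply mul_right_cancel₀ hD
    rw [mul_assoc, hT]; linarith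
  have hC : qx * ex + qy * ey = -g := by
    have : qx * ex + qy * ey = (px * qx + py * qy) + (qx ^ 2 + qy ^ 2) / tf := by
      rw [hex, hey]; field_simp; ring
    rw [this, hQ, ← hh, mul_div_cancel_right₀ _ htf]; ring
  rw [hA, hC, div_mul_eq_mul_div, neg_mul, hB]
  ring
end

section
/- Let $\bar a_P, \bar v_P, \bar v_E, t, \theta \in \mathbb{R}$ with $t > 0$. Define $p_x = v_{Px}+\bar a_P t\cos\theta$, $p_y = v_{Py}+\bar a_P t\sin\theta$, $q_x = x_P-x_E-\tfrac{1}{2}\bar a_P t^2\cos\theta$, $q_y = y_P-y_E-\tfrac{1}{2}\bar a_P t^2\sin\theta$, and assume $p_x^2+p_y^2 = \bar v_P^2$, $\bar v_E t\cos\theta = q_x+p_xt$, and $\bar v_E t\sin\theta = q_y+p_yt$. Then $(\bar v_P^2-\bar v_E^2)t^2+2(p_xq_x+p_yq_y)t+q_x^2+q_y^2 = 0$ holds if and only if $(x_P-x_E+v_{Px}t)^2+(y_P-y_E+v_{Py}t)^2 = (\tfrac{1}{2}\bar a_P t^2-\bar v_E t)^2$, and in fact both equalities hold. -/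
/-- Continuity of the value function at the boundary between the two strategy regimes:
when capture occurs exactly when the pursuer reaches maximum speed, the after-maximum-speed
capture-time quadratic is equivalent to the internal-tangency equation of the
before-maximum-speed regime, and in fact both hold. -/
theorem regime_boundary_equivalence
    (aP vP vE t θ xP yP vPx vPy xE yE : ℝ) (ht : 0 < t) :
    let px := vPx + aP * t * Real.cos θ
    let py := vPy + aP * t * Real.sin θ
    let qx := xP - xE - (1 / 2) * aP * t ^ 2 * Real.cos θ
    let qy := yP - yE - (1 / 2) * aP * t ^ 2 * Real.sin θ
    px ^ 2 + py ^ 2 = vP ^ 2 →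
    vE * t * Real.cos θ = qx + px * t →
    vE * t * Real.sin θ = qy + py * t →
    (((vP ^ 2 - vE ^ 2) * t ^ 2 + 2 * (px * qx + py * qy) * t + qx ^ 2 + qy ^ 2 = 0 ↔
      (xP - xE + vPx * t) ^ 2 + (yP - yE + vPy * t) ^ 2
        = ((1 / 2) * aP * t ^ 2 - vE * t) ^ 2) ∧
     ((vP ^ 2 - vE ^ 2) * t ^ 2 + 2 * (px * qx + py * qy) * t + qx ^ 2 + qy ^ 2 = 0) ∧
     ((xP - xE + vPx * t) ^ 2 + (yP - yE + vPy * t) ^ 2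
        = ((1 / 2) * aP * t ^ 2 - vE * t) ^ 2)) := by
  intro px py qx qy h1 h2 h3
  have hcs := Real.sin_sq_add_cos_sq θ
  have A : (vP ^ 2 - vE ^ 2) * t ^ 2 + 2 * (px * qx + py * qy) * t + qx ^ 2 + qy ^ 2 = 0 := by
    have e : (qx + px * t) ^ 2 + (qy + py * t) ^ 2 = vE ^ 2 * t ^ 2 := by
      rw [← h2, ← h3]
      linear_combination (vE ^ 2 * t ^ 2) * hcs
    linear_combination e - t ^ 2 * h1
  have B : (xP - xE + vPx * t) ^ 2 + (yP - yE + vPy * t) ^ 2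
        = ((1 / 2) * aP * t ^ 2 - vE * t) ^ 2 := by
    have ex : xP - xE + vPx * t = (vE * t - (1 / 2) * aP * t ^ 2) * Real.cos θ := by
      simp only [px, qx] at h2
      linear_combination -h2
    have ey : yP - yE + vPy * t = (vE * t - (1 / 2) * aP * t ^ 2) * Real.sin θ := by
      simp only [py, qy] at h3
      linear_combination -h3
    rw [ex, ey]
    linear_combination ((vE * t - (1 / 2) * aP * t ^ 2) ^ 2) * hcs
  exact ⟨⟨fun _ => B, fun _ => A⟩, A, B⟩
end

section
/- Let $\bar v_P > \bar v_E \ge 0$, let $(\Delta_x, \Delta_y) \in \mathbb{R}^2$ with $(\Delta_x,\Delta_y) \ne (0,0)$, and let $\theta \in \mathbb{R}$. Define $f(\tau) = \dfrac{1}{\bar v_P}\sqrt{(\Delta_x+\bar v_E\tau\cos\theta)^2+(\Delta_y+\bar v_E\tau\sin\theta)^2}$ for $\tau \ge 0$. Then (i) there exists $\tau > 0$ with $f(\tau) = \tau$; and (ii) for every $\tau_0 > 0$ with $f(\tau_0) < \tau_0$, there exists $\tau' \in (0, \tau_0)$ with $f(\tau') = \tau'$. -/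
/-- Straight-line capture after reaching maximum speed: (i) the fixed-point equation
`f(τ) = τ` has a positive solution; (ii) any `τ₀ > 0` with `f(τ₀) < τ₀` is strictly
larger than some positive fixed point of `f`. -/
theorem straight_line_capture_fixed_point
    (vP vE Δx Δy θ : ℝ) (hlt : vE < vP) (hvE : 0 ≤ vE)
    (hΔ : (Δx, Δy) ≠ (0, 0)) :
    let f : ℝ → ℝ := fun τ =>
      Real.sqrt ((Δx + vE * τ * Real.cos θ) ^ 2 + (Δy + vE * τ * Real.sin θ) ^ 2) / vP
    (∃ τ : ℝ, 0 < τ ∧ f τ = τ) ∧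
    (∀ τ0 : ℝ, 0 < τ0 → f τ0 < τ0 → ∃ τ' : ℝ, 0 < τ' ∧ τ' < τ0 ∧ f τ' = τ') := by
  intro f
  have hP : 0 < vP := lt_of_le_of_lt hvE hlt
  have hc : Continuous f := by
    show Continuous (fun τ : ℝ =>
      Real.sqrt ((Δx + vE * τ * Real.cos θ) ^ 2 + (Δy + vE * τ * Real.sin θ) ^ 2) / vP)
    fun_prop
  have h0 : 0 < f 0 := by
    have h : 0 < Δx ^ 2 + Δy ^ 2 := by
      by_contra hn
      apply hΔ
      have hx : Δx = 0 := by nlinarith [sq_nonneg Δx, sq_nonneg Δy]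
      have hy : Δy = 0 := by nlinarith [sq_nonneg Δx, sq_nonneg Δy]
      rw [hx, hy]
    have : f 0 = Real.sqrt (Δx ^ 2 + Δy ^ 2) / vP := by simp [f]
    rw [this]
    positivity
  have key : ∀ τ0 : ℝ, 0 < τ0 → f τ0 < τ0 → ∃ τ' : ℝ, 0 < τ' ∧ τ' < τ0 ∧ f τ' = τ' := by
    intro t ht hft
    have hg : ContinuousOn (fun x => f x - x) (Set.Icc 0 t) := by fun_prop
    obtain ⟨x, hx, hx0⟩ := intermediate_value_Ioo' ht.le hg
      (show (0:ℝ) ∈ Set.Ioo (f t - t) (f 0 - 0) from ⟨by linarith, by linarith⟩)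
    exact ⟨x, hx.1, hx.2, sub_eq_zero.mp hx0⟩
  refine ⟨?_, key⟩
  have hd : 0 < vP - vE := sub_pos.mpr hlt
  obtain ⟨T, hT⟩ : ∃ T, T = (|Δx| + |Δy| + 1) / (vP - vE) := ⟨_, rfl⟩
  have hTpos : 0 < T := by rw [hT]; positivity
  have hTe : T * vP = |Δx| + |Δy| + 1 + vE * T := by
    have : T * (vP - vE) = |Δx| + |Δy| + 1 := by rw [hT]; field_simp
    linarith
  have hfT : f T < T := by
    show Real.sqrt ((Δx + vE * T * Real.cos θ) ^ 2 + (Δy + vE * T * Real.sin θ) ^ 2) / vP < T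
    rw [div_lt_iff₀ hP, Real.sqrt_lt' (by positivity), hTe]
    have ha : 0 ≤ vE * T := by positivity
    generalize vE * T = a at ha
    have h1 : Δx * Real.cos θ ≤ |Δx| := by
      refine (le_abs_self _).trans ?_
      rw [abs_mul]
      exact mul_le_of_le_one_right (abs_nonneg _) (Real.abs_cos_le_one θ)
    have h2 : Δy * Real.sin θ ≤ |Δy| := by
      refine (le_abs_self _).trans ?_
      rw [abs_mul]
      exact mul_le_of_le_one_right (abs_nonneg _) (Real.abs_sin_le_one θ)
    have e : (Δx + a * Real.cos θ) ^ 2 + (Δy + a * Real.sin θ) ^ 2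
        = |Δx| ^ 2 + |Δy| ^ 2 + 2 * (a * (Δx * Real.cos θ)) + 2 * (a * (Δy * Real.sin θ)) + a ^ 2 := by
      rw [sq_abs, sq_abs]
      linear_combination a ^ 2 * Real.sin_sq_add_cos_sq θ
    rw [e]
    have h3 := mul_le_mul_of_nonneg_left h1 ha
    have h4 := mul_le_mul_of_nonneg_left h2 ha
    have h5 := mul_nonneg (abs_nonneg Δx) (abs_nonneg Δy)
    nlinarith [abs_nonneg Δx, abs_nonneg Δy]
  obtain ⟨x, hx, _, h⟩ := key T hTpos hfT
  exact ⟨x, hx, h⟩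
end

section
/- Let $\bar a_P > 0$, $\bar v_P > 0$, $s > 0$, and $\theta, x_P, y_P, v_{Px}, v_{Py}, t \in \mathbb{R}$, and assume $v_{Px}\cos\theta + v_{Py}\sin\theta = \dfrac{\bar v_P^2-v_{Px}^2-v_{Py}^2-\bar a_P^2 s^2}{2\bar a_P s}$. Define $X(t) = x_P+v_{Px}t+\tfrac{1}{2}\bar a_P\cos\theta\,(2ts-s^2)$, $Y(t) = y_P+v_{Py}t+\tfrac{1}{2}\bar a_P\sin\theta\,(2ts-s^2)$ and $c' = (x_P+\bar v_P v_{Px}/\bar a_P,\; y_P+\bar v_P v_{Py}/\bar a_P)$. Then \[(X(t)-c'_x)^2+(Y(t)-c'_y)^2 = (v_{Px}^2+v_{Py}^2)\Big(t-\tfrac{\bar v_P}{\bar a_P}\Big)^2 + \tfrac{1}{2}(2t-s)\Big(t-\tfrac{\bar v_P}{\bar a_P}\Big)\big(\bar v_P^2-v_{Px}^2-v_{Py}^2-\bar a_P^2 s^2\big) + \tfrac{1}{4}\bar a_P^2(2ts-s^2)^2.\] Moreover, writing $\rho = \sqrt{v_{Px}^2+v_{Py}^2}$, if $s = (\bar v_P-\rho)/\bar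 a_P$ or $s = (\bar v_P+\rho)/\bar a_P$, then the right-hand side equals $\Big(\bar v_P t - \dfrac{v_{Px}^2+v_{Py}^2+\bar v_P^2}{2\bar a_P}\Big)^2$. -/
/-- Squared distance from the pursuer's post-maximum-speed position to the reference
center `c'` of the oval of reachable points, and its evaluation at the extreme values of
the time-to-maximum-speed `s`. -/
theorem oval_distance_formula
    (aP vP s θ xP yP vPx vPy t : ℝ)
    (haP : 0 < aP) (hvP : 0 < vP) (hs : 0 < s)
    (hrel : vPx * Real.cos θ + vPy * Real.sin θ
        = (vP ^ 2 - vPx ^ 2 - vPy ^ 2 - aP ^ 2 * s ^ 2) / (2 * aP * s)) :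
    let X := xP + vPx * t + (1 / 2) * aP * Real.cos θ * (2 * t * s - s ^ 2)
    let Y := yP + vPy * t + (1 / 2) * aP * Real.sin θ * (2 * t * s - s ^ 2)
    let cx := xP + vP * vPx / aP
    let cy := yP + vP * vPy / aP
    ((X - cx) ^ 2 + (Y - cy) ^ 2
      = (vPx ^ 2 + vPy ^ 2) * (t - vP / aP) ^ 2
        + (1 / 2) * (2 * t - s) * (t - vP / aP)
            * (vP ^ 2 - vPx ^ 2 - vPy ^ 2 - aP ^ 2 * s ^ 2)
        + (1 / 4) * aP ^ 2 * (2 * t * s - s ^ 2) ^ 2) ∧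
    (let ρ := Real.sqrt (vPx ^ 2 + vPy ^ 2)
     (s = (vP - ρ) / aP ∨ s = (vP + ρ) / aP) →
      (vPx ^ 2 + vPy ^ 2) * (t - vP / aP) ^ 2
        + (1 / 2) * (2 * t - s) * (t - vP / aP)
            * (vP ^ 2 - vPx ^ 2 - vPy ^ 2 - aP ^ 2 * s ^ 2)
        + (1 / 4) * aP ^ 2 * (2 * t * s - s ^ 2) ^ 2
      = (vP * t - (vPx ^ 2 + vPy ^ 2 + vP ^ 2) / (2 * aP)) ^ 2) := by
  intro X Y cx cy
  have ha : aP ≠ 0 := haP.ne'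
  have hs' : s ≠ 0 := hs.ne'
  constructor
  · have hK : vP ^ 2 - vPx ^ 2 - vPy ^ 2 - aP ^ 2 * s ^ 2
        = (vPx * Real.cos θ + vPy * Real.sin θ) * (2 * aP * s) := by
      rw [hrel]; field_simp
    have h1 : X - cx = vPx * (t - vP / aP)
        + (1 / 2) * aP * Real.cos θ * (2 * t * s - s ^ 2) := by
      simp only [X, cx]; ring
    have h2 : Y - cy = vPy * (t - vP / aP)
        + (1 / 2) * aP * Real.sin θ * (2 * t * s - s ^ 2) := by
      simp only [Y, cy]; ring
    rw [h1, h2, hK]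
    linear_combination (1 / 4) * aP ^ 2 * (2 * t * s - s ^ 2) ^ 2 * Real.sin_sq_add_cos_sq θ
  · intro ρ h
    have hr : vPx ^ 2 + vPy ^ 2 = ρ ^ 2 := (Real.sq_sqrt (by positivity)).symm
    have hr' : vP ^ 2 - vPx ^ 2 - vPy ^ 2 - aP ^ 2 * s ^ 2
        = vP ^ 2 - ρ ^ 2 - aP ^ 2 * s ^ 2 := by linarith
    rw [hr', hr]
    clear_value ρ
    rcases h with h | h
    · rw [h]; field_simp; ring
    · rw [h]; field_simp; ring
end
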